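/- arXiv:1204.2124 — 6 statements merged into one kernel-verified Lean document; each statement's English description precedes it below -/
import Mathlib

section
/- Let G be a finite simple graph with connected components G_1, …, G_k (k ≥ 1) and let ℓ ≥ 2. There exists a surjective homomorphism from G to the path P_ℓ on ℓ vertices if and only if G is bipartite and diam(G_1) + … + diam(G_k) + k ≥ ℓ. -/
/-!
Under a homomorphism to a path, adjacent vertices change level by exactly one, so the image of a
component `c` has at most `diam c + 1` vertices, and the images of the components cover the path.

Conversely, in a bipartite component the distance from a vertex `u` also changes by exactly one
along each edge. For `u` of maximal eccentricity, the shifted levels `a + dist u ·` thus map the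
component homomorphically onto the `diam c + 1` consecutive integers starting at `a`. Such
intervals, placed one after the other, cover `0, …, ℓ - 1`, and whatever sticks out of the path is
folded back onto its last edge.
-/

section ExtendedNatSums

variable {ι : Type*}

theorem natCast_le_iSup_iff [Nonempty ι] {f : ι → ℕ∞} {n : ℕ} :
    (n : ℕ∞) ≤ ⨆ i, f i ↔ ∃ i, (n : ℕ∞) ≤ f i := by
  cases n with
  | zero => simp
  | succ n => simp only [Nat.cast_add_one, ENat.add_one_le_iff (ENat.natCast_ne_top n), lt_iSup_iff]

theorem enat_hasSum (f : ι → ℕ∞) : HasSum f (⨆ s : Finset ι, ∑ i ∈ s, f i) :=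
  hasSum_of_isLUB _ isLUB_iSup

theorem natCast_le_enat_tsum_iff {f : ι → ℕ∞} {n : ℕ} :
    (n : ℕ∞) ≤ ∑' i, f i ↔ ∃ s : Finset ι, (n : ℕ∞) ≤ ∑ i ∈ s, f i := by
  rw [(enat_hasSum f).tsum_eq, natCast_le_iSup_iff]

theorem encard_le_tsum_encard_of_subset_iUnion {α : Type*} {t : Set α} (ht : t.Finite)
    {s : ι → Set α} (hts : t ⊆ ⋃ i, s i) : t.encard ≤ ∑' i, (s i).encard := by
  obtain ⟨I, hI, htI⟩ := Set.finite_subset_iUnion ht hts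
  rw [← ht.cast_ncard_eq, natCast_le_enat_tsum_iff, ht.cast_ncard_eq]
  refine ⟨hI.toFinset, (Set.encard_le_encard htI).trans ?_⟩
  simpa using hI.toFinset.set_encard_biUnion_le s

theorem exists_offsets_cover_of_lt_sum (s : Finset ι) (d : ι → ℕ∞) :
    ∃ a : ι → ℕ, ∀ n : ℕ, (n : ℕ∞) < ∑ i ∈ s, (d i + 1) →
      ∃ i ∈ s, a i ≤ n ∧ (n : ℕ∞) ≤ a i + d i := by
  classical
  induction s using Finset.induction_on with
  | empty => exact ⟨0, by simp⟩
  | insert j s hj ih =>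
    obtain ⟨a, ha⟩ := ih
    refine ⟨Function.update a j (∑ i ∈ s, (d i + 1)).toNat, fun n hn ↦ ?_⟩
    rw [Finset.sum_insert hj] at hn
    rcases lt_or_ge (n : ℕ∞) (∑ i ∈ s, (d i + 1)) with hlt | hge
    · obtain ⟨i, hi, hcover⟩ := ha n hlt
      have hij : i ≠ j := ne_of_mem_of_not_mem hi hj
      exact ⟨i, Finset.mem_insert_of_mem hi, by simpa [hij] using hcover⟩
    · lift ∑ i ∈ s, (d i + 1) to ℕ using ne_top_of_le_ne_top (ENat.natCast_ne_top n) hge with m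
      refine ⟨j, Finset.mem_insert_self j s, by simpa using hge, ?_⟩
      rw [add_right_comm, add_comm (d j)] at hn
      rw [Function.update_self, ENat.toNat_natCast]
      exact Order.le_of_lt_add_one hn

end ExtendedNatSums

section Distance

open SimpleGraph

variable {V : Type*} {G : SimpleGraph V} {u v w : V}

theorem exists_eccent_eq_ediam [Nonempty V] (G : SimpleGraph V) : ∃ u, G.eccent u = G.ediam := by
  by_cases h : G.ediam = ⊤
  · refine ⟨Classical.arbitrary V, ?_⟩
    rw [h, ← top_le_iff, ← ediam_eq_top_iff_radius_eq_top.1 h]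
    exact radius_le_eccent
  · exact exists_eccent_eq_ediam_of_ne_top h

theorem exists_dist_eq_of_le_dist (huv : G.Reachable u v) {n : ℕ} (hn : n ≤ G.dist u v) :
    ∃ w, G.dist u w = n := by
  obtain ⟨p, hp⟩ := huv.exists_walk_length_eq_dist
  refine ⟨p.getVert n, ?_⟩
  rw [← length_eq_dist_of_subwalk hp (p.isSubwalk_take n), Walk.take_length]
  omega

theorem exists_forall_exists_dist_eq_of_le_ediam (hG : G.Connected) :
    ∃ u, ∀ n : ℕ, (n : ℕ∞) ≤ G.ediam → ∃ v, G.dist u v = n := by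
  have := hG.nonempty
  obtain ⟨u, hu⟩ := exists_eccent_eq_ediam G
  refine ⟨u, fun n hn ↦ ?_⟩
  rw [← hu, eccent, natCast_le_iSup_iff] at hn
  obtain ⟨v, hv⟩ := hn
  rw [← (hG u v).coe_dist_eq_edist, Nat.cast_le] at hv
  exact exists_dist_eq_of_le_dist (hG u v) hv

theorem dist_ne_dist_of_adj_of_colorable_two (hcol : G.Colorable 2) (huv : G.Reachable u v)
    (hvw : G.Adj v w) : G.dist u v ≠ G.dist u w := by
  have C : G.Coloring Bool := hcol.toColoring (by simp)
  obtain ⟨p, hp⟩ := huv.exists_walk_length_eq_dist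
  obtain ⟨q, hq⟩ := (huv.trans hvw.reachable).exists_walk_length_eq_dist
  intro heq
  have hparity : (C u ↔ C v) ↔ (C u ↔ C w) := by
    rw [← C.even_length_iff_congr p, ← C.even_length_iff_congr q, hp, hq, heq]
  exact C.valid hvw (Bool.eq_iff_iff.2 (by tauto))

theorem le_add_length_of_adj_le_add_one {f : V → ℕ} (hf : ∀ v w, G.Adj v w → f w ≤ f v + 1)
    (p : G.Walk u v) : f v ≤ f u + p.length := by
  induction p with
  | nil => simp
  | cons hadj p ih =>
    have := hf _ _ hadj
    rw [Walk.length_cons]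
    omega

theorem encard_range_le_ediam_add_one {f : V → ℕ} (hf : ∀ v w, G.Adj v w → f w ≤ f v + 1) :
    (Set.range f).encard ≤ G.ediam + 1 := by
  cases isEmpty_or_nonempty V with
  | inl _ => simp [Set.range_eq_empty]
  | inr _ =>
    by_cases htop : G.ediam = ⊤
    · simp [htop]
    have hG := connected_of_ediam_ne_top htop
    obtain ⟨u, hu⟩ : ∃ u, ∀ v, f u ≤ f v := ⟨_, fun v ↦ Function.argmin_le f v⟩
    have hrange : Set.range f ⊆ Finset.Icc (f u) (f u + G.diam) := by
      rintro _ ⟨v, rfl⟩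
      obtain ⟨p, hp⟩ := hG.exists_walk_length_eq_dist u v
      have hlip := le_add_length_of_adj_le_add_one hf p
      have hdiam := dist_le_diam htop (u := u) (v := v)
      exact Finset.mem_coe.2 (Finset.mem_Icc.2 ⟨hu v, by omega⟩)
    calc (Set.range f).encard ≤ (G.diam + 1 : ℕ) := by
          refine (Set.encard_le_encard hrange).trans_eq ?_
          rw [Set.encard_coe_eq_coe_finsetCard, Nat.card_Icc, add_assoc, Nat.add_sub_cancel_left]
      _ = G.ediam + 1 := by rw [Nat.cast_add_one, diam, ENat.natCast_toNat htop]

end Distance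

section PathHoms

open SimpleGraph

variable {V : Type*} {G : SimpleGraph V} {ℓ : ℕ}

/-- The retraction of the one-way infinite path onto its initial segment `P_ℓ`, which folds every
vertex beyond the end of `P_ℓ` onto the last edge of `P_ℓ`. -/
def pathFold (hℓ : 2 ≤ ℓ) : hasse ℕ →g pathGraph ℓ where
  toFun n := ⟨if n < ℓ then n else ℓ - 2 + (n - ℓ) % 2, by split_ifs <;> omega⟩
  map_rel' {m n} h := by
    simp only [hasse_adj, Nat.covBy_iff_add_one_eq] at h
    simp only [pathGraph_adj]
    split_ifs <;> omega

theorem pathFold_coe (hℓ : 2 ≤ ℓ) (i : Fin ℓ) : pathFold hℓ i = i :=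
  Fin.ext (if_pos i.isLt)

/-- The levels of a connected bipartite graph as seen from the vertex `u`, shifted upwards by `a`,
as a homomorphism to the one-way infinite path. -/
noncomputable def shiftedDistHom (hG : G.Connected) (hcol : G.Colorable 2) (u : V) (a : ℕ) :
    G →g hasse ℕ where
  toFun v := a + G.dist u v
  map_rel' {v w} h := by
    have hne := dist_ne_dist_of_adj_of_colorable_two hcol (hG u v) h
    have hdiff := h.diff_dist_adj (u := u)
    simp only [hasse_adj, Nat.covBy_iff_add_one_eq]
    omega

theorem exists_hom_pathGraph_cover (hG : G.Connected) (hcol : G.Colorable 2) (hℓ : 2 ≤ ℓ)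
    (a : ℕ) : ∃ f : G →g pathGraph ℓ, ∀ i : Fin ℓ, a ≤ i → (i : ℕ∞) ≤ a + G.ediam →
      i ∈ Set.range f := by
  obtain ⟨u, hu⟩ := exists_forall_exists_dist_eq_of_le_ediam hG
  refine ⟨(pathFold hℓ).comp (shiftedDistHom hG hcol u a), fun i hai hi ↦ ?_⟩
  obtain ⟨n, hn⟩ := Nat.exists_eq_add_of_le hai
  rw [hn, Nat.cast_add, ENat.add_le_add_iff_left (ENat.natCast_ne_top a)] at hi
  obtain ⟨v, hv⟩ := hu n hi
  have hlevel : shiftedDistHom hG hcol u a v = (i : ℕ) := by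
    rw [hn, ← hv]
    rfl
  exact ⟨v, (congrArg (pathFold hℓ) hlevel).trans (pathFold_coe hℓ i)⟩

theorem encard_range_hom_pathGraph_le (f : G →g pathGraph ℓ) :
    (Set.range f).encard ≤ G.ediam + 1 := by
  rw [← Fin.val_injective.encard_image, ← Set.range_comp]
  refine encard_range_le_ediam_add_one fun v w h ↦ ?_
  have := pathGraph_adj.1 (f.map_adj h)
  simp only [Function.comp_apply]
  omega

theorem le_tsum_ediam_add_one_of_surjective {f : G →g pathGraph ℓ} (hf : Function.Surjective f) :
    (ℓ : ℕ∞) ≤ ∑' c : G.ConnectedComponent, ((G.induce c.supp).ediam + 1) := by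
  have hcover : Set.univ ⊆ ⋃ c : G.ConnectedComponent, Set.range (f.comp c.toSimpleGraph_hom) := by
    intro i _
    obtain ⟨v, rfl⟩ := hf i
    exact Set.mem_iUnion.2 ⟨G.connectedComponentMk v, ⟨v, rfl⟩, rfl⟩
  calc (ℓ : ℕ∞) = (Set.univ : Set (Fin ℓ)).encard := by simp
    _ ≤ ∑' c : G.ConnectedComponent, (Set.range (f.comp c.toSimpleGraph_hom)).encard :=
      encard_le_tsum_encard_of_subset_iUnion Set.finite_univ hcover
    _ ≤ ∑' c : G.ConnectedComponent, ((G.induce c.supp).ediam + 1) :=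
      (enat_hasSum _).summable.tsum_le_tsum (fun _ ↦ encard_range_hom_pathGraph_le _)
        (enat_hasSum _).summable

theorem exists_surjective_hom_pathGraph (hcol : G.Colorable 2) (hℓ : 2 ≤ ℓ)
    (hle : (ℓ : ℕ∞) ≤ ∑' c : G.ConnectedComponent, ((G.induce c.supp).ediam + 1)) :
    ∃ f : G →g pathGraph ℓ, Function.Surjective f := by
  obtain ⟨s, hs⟩ := natCast_le_enat_tsum_iff.1 hle
  obtain ⟨a, ha⟩ := exists_offsets_cover_of_lt_sum s fun c ↦ (G.induce c.supp).ediam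
  choose f hf using fun c : G.ConnectedComponent ↦ exists_hom_pathGraph_cover
    c.connected_toSimpleGraph (hcol.of_hom c.toSimpleGraph_hom) hℓ (a c)
  refine ⟨G.homOfConnectedComponents f, fun i ↦ ?_⟩
  obtain ⟨c, -, hac, hca⟩ := ha i ((Nat.cast_lt.2 i.isLt).trans_le hs)
  obtain ⟨⟨v, rfl⟩, hv⟩ := hf c i hac hca
  exact ⟨v, hv⟩

theorem tsum_ediam_add_one_eq_sum_diam_add_card [Finite V] [Fintype G.ConnectedComponent] :
    ∑' c : G.ConnectedComponent, ((G.induce c.supp).ediam + 1) =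
      ((∑ c : G.ConnectedComponent, (G.induce c.supp).diam) +
        Fintype.card G.ConnectedComponent : ℕ) := by
  have hdiam (c : G.ConnectedComponent) : ((G.induce c.supp).diam : ℕ∞) = (G.induce c.supp).ediam :=
    have := c.connected_toSimpleGraph.nonempty
    ENat.natCast_toNat (connected_iff_ediam_ne_top.1 c.connected_toSimpleGraph)
  simp [tsum_fintype, Finset.sum_add_distrib, hdiam]

theorem surjective_hom_to_path_iff_general (G : SimpleGraph V) (hℓ : 2 ≤ ℓ) :
    (∃ f : G →g pathGraph ℓ, Function.Surjective f) ↔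
      G.Colorable 2 ∧
        (ℓ : ℕ∞) ≤ ∑' c : G.ConnectedComponent, ((G.induce c.supp).ediam + 1) := by
  constructor
  · rintro ⟨f, hf⟩
    exact ⟨(pathGraph.bicoloring ℓ).colorable.of_hom f, le_tsum_ediam_add_one_of_surjective hf⟩
  · rintro ⟨hcol, hle⟩
    exact exists_surjective_hom_pathGraph hcol hℓ hle

end PathHoms

/-- Let `G` be a finite simple graph with connected components
`G₁, …, G_k` (`k ≥ 1`) and let `ℓ ≥ 2`. There exists a surjective homomorphism from `G`
to the path `P_ℓ` on `ℓ` vertices if and only if `G` is bipartite and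
`diam G₁ + … + diam G_k + k ≥ ℓ`. -/
theorem surjective_hom_to_path_iff {V : Type*} [Fintype V] (G : SimpleGraph V)
    [Fintype G.ConnectedComponent] (hk : 1 ≤ Fintype.card G.ConnectedComponent)
    (ℓ : ℕ) (hℓ : 2 ≤ ℓ) :
    (∃ f : G →g SimpleGraph.pathGraph ℓ, Function.Surjective f) ↔
      G.Colorable 2 ∧
        ℓ ≤ (∑ c : G.ConnectedComponent, (G.induce c.supp).diam) +
              Fintype.card G.ConnectedComponent := by
  rw [surjective_hom_to_path_iff_general G hℓ, tsum_ediam_add_one_eq_sum_diam_add_card,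
    Nat.cast_le]
end

section
/- Let F be a finite connected bipartite graph and let s ≥ 2 be an integer with s ≤ diam(F) + 1. Then there exists a surjective homomorphism from F to the path P_s on s vertices. -/
/-!
Fix a vertex `a` of a connected bipartite graph. Adjacent vertices have distances from `a` that
differ by exactly one, so `x ↦ dist a x` is a homomorphism to the one-way infinite path on `ℕ`.
That path retracts onto its first `s ≥ 2` vertices, by letting everything beyond them oscillate
along the last edge. If some vertex is at distance at least `s - 1` from `a`, then all the distances
`0, …, s - 1` occur, so the composite is surjective.
-/

section Distance

variable {V : Type*} {G : SimpleGraph V}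

theorem dist_ne_dist_of_adj {u v w : V} (hG : G.Colorable 2) (huv : G.Reachable u v)
    (hvw : G.Adj v w) : G.dist u v ≠ G.dist u w := by
  intro heq
  obtain ⟨p, hp⟩ := huv.exists_walk_length_eq_dist
  obtain ⟨q, hq⟩ := (huv.trans hvw.reachable).exists_walk_length_eq_dist
  let loop := p.append (.cons hvw q.reverse)
  have hlength : loop.length = 2 * G.dist u w + 1 := by
    simp only [loop, SimpleGraph.Walk.length_append, SimpleGraph.Walk.length_cons,
      SimpleGraph.Walk.length_reverse, hp, hq, heq]
    ring
  have heven : Even loop.length := SimpleGraph.two_colorable_iff_forall_loop_even.mp hG u loop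
  exact Nat.not_even_two_mul_add_one _ (hlength ▸ heven)

/-- The distance from `u`, as a homomorphism from a connected bipartite graph to the one-way
infinite path, which is encoded as the Hasse diagram of `ℕ`. -/
noncomputable def distHom (hconn : G.Preconnected) (hG : G.Colorable 2) (u : V) :
    G →g SimpleGraph.hasse ℕ where
  toFun := G.dist u
  map_rel' {v w} hvw := by
    have hne := dist_ne_dist_of_adj hG (hconn u v) hvw
    have hdiff := hvw.diff_dist_adj (u := u)
    simp only [SimpleGraph.hasse_adj, Nat.covBy_iff_add_one_eq]
    lia

theorem exists_dist_eq_of_le_dist_s2 {u v : V} {k : ℕ} (hk : k ≤ G.dist u v) :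
    ∃ w, G.dist u w = k := by
  obtain rfl | hpos := k.eq_zero_or_pos
  · exact ⟨u, G.dist_self⟩
  obtain ⟨p, hp⟩ := SimpleGraph.exists_walk_of_dist_ne_zero (hpos.trans_le hk).ne'
  refine ⟨p.getVert k, ?_⟩
  rw [← SimpleGraph.length_eq_dist_of_subwalk hp (p.isSubwalk_take k),
    SimpleGraph.Walk.take_length, hp, min_eq_left hk]

theorem exists_le_dist_of_le_ediam (hG : G.Connected) {k : ℕ} (hk : k ≤ G.ediam) :
    ∃ u v, k ≤ G.dist u v := by
  obtain _ | m := k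
  · obtain ⟨u⟩ := hG.nonempty
    exact ⟨u, u, Nat.zero_le _⟩
  have hm : (m : ℕ∞) < G.ediam := (Nat.cast_lt.mpr m.lt_succ_self).trans_le hk
  simp only [SimpleGraph.ediam_eq_iSup_iSup_edist, lt_iSup_iff] at hm
  obtain ⟨u, v, huv⟩ := hm
  rw [← (hG u v).coe_dist_eq_edist, Nat.cast_lt] at huv
  exact ⟨u, v, huv⟩

end Distance

section Fold

variable {s : ℕ}

/-- The retraction of the one-way infinite path, encoded as the Hasse diagram of `ℕ`, onto its first
`s` vertices: every `k ≥ s - 1` goes to `s - 1` or `s - 2`, according to the parity of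
`k - (s - 1)`. The truncated subtraction `k - (s - 1)` vanishes for the other `k`, which are thus
fixed by the minimum. -/
def foldHom (hs : 2 ≤ s) : SimpleGraph.hasse ℕ →g SimpleGraph.pathGraph s where
  toFun k := ⟨min k (s - 1 - (k - (s - 1)) % 2), by lia⟩
  map_rel' {k l} hkl := by
    rw [SimpleGraph.hasse_adj, Nat.covBy_iff_add_one_eq, Nat.covBy_iff_add_one_eq] at hkl
    rw [SimpleGraph.pathGraph_adj]
    lia

theorem foldHom_val (hs : 2 ≤ s) (i : Fin s) : foldHom hs i.val = i :=
  Fin.ext <| show min i.val (s - 1 - (i.val - (s - 1)) % 2) = i.val by lia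

end Fold

theorem surjective_hom_connected_bipartite_to_path_general {V : Type*}
    (F : SimpleGraph V) (hF : F.Connected) (hbip : F.Colorable 2)
    (s : ℕ) (hs2 : 2 ≤ s) (hs : s ≤ F.ediam + 1) :
    ∃ f : F →g SimpleGraph.pathGraph s, Function.Surjective f := by
  have hs' : ((s - 1 : ℕ) : ℕ∞) ≤ F.ediam := by
    rw [ENat.natCast_sub]
    exact tsub_le_iff_right.mpr hs
  obtain ⟨a, b, hab⟩ := exists_le_dist_of_le_ediam hF hs'
  refine ⟨(foldHom hs2).comp (distHom hF.preconnected hbip a), fun i ↦ ?_⟩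
  obtain ⟨x, hx⟩ : ∃ x, F.dist a x = i := exists_dist_eq_of_le_dist_s2 (v := b) (by lia)
  exact ⟨x, (congrArg (foldHom hs2) hx).trans (foldHom_val hs2 i)⟩

/-- Let `F` be a finite connected bipartite graph and let `s ≥ 2` be an
integer with `s ≤ diam F + 1`. Then there exists a surjective homomorphism from `F` to the
path `P_s` on `s` vertices. -/
theorem surjective_hom_connected_bipartite_to_path {V : Type*} [Fintype V]
    (F : SimpleGraph V) (hF : F.Connected) (hbip : F.Colorable 2)
    (s : ℕ) (hs2 : 2 ≤ s) (hs : s ≤ F.diam + 1) :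
    ∃ f : F →g SimpleGraph.pathGraph s, Function.Surjective f := by
  refine surjective_hom_connected_bipartite_to_path_general F hF hbip s hs2 ?_
  exact (Nat.cast_le.mpr hs).trans (add_le_add_left F.ediam.natCast_toNat_le_self 1)
end

section
/- Let A = {a_1, …, a_n} be an (m,B)-positive multiset of integers. Set p_i = a_i + B for i = 1, …, n and q = 4B. Let G be the linear forest P_{p_1} + P_{p_2} + … + P_{p_n} (the disjoint union of paths on p_1, …, p_n vertices) and let H be the disjoint union of m copies of the path P_q. Then A has a 3-partition if and only if there exists a surjective homomorphism from G to H. -/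
/-- The disjoint union of an indexed family of graphs, on the sigma type. -/
def disjointUnionGraph {ι : Type*} {F : ι → Type*} (Gs : ∀ i, SimpleGraph (F i)) :
    SimpleGraph (Σ i, F i) :=
  SimpleGraph.fromRel
    (fun x y => ∃ (i : ι) (u v : F i), (Gs i).Adj u v ∧ x = ⟨i, u⟩ ∧ y = ⟨i, v⟩)

/-- `a : Fin n → ℕ` (an `(m,B)`-positive multiset, given via the hypotheses `n = 3m`,
`∑ aᵢ = mB`, `aᵢ > 0`) has a 3-partition: the index set splits into `m` classes, each of
size 3 and with elements summing to `B`. -/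
def HasThreePartition (n m B : ℕ) (a : Fin n → ℕ) : Prop :=
  ∃ part : Fin n → Fin m, ∀ j : Fin m,
    (Finset.univ.filter (fun i => part i = j)).card = 3 ∧
    ∑ i ∈ Finset.univ.filter (fun i => part i = j), a i = B

/-!
A homomorphism maps each (connected) path of `G` into a single path of `H`. Since `G` and `H` have
equally many vertices, a surjective homomorphism is bijective, so the paths of `G` landing in a
given copy of `P_q` have total length exactly `q`; conversely, paths of total length `q` laid end to
end cover `P_q`. The shift `p_i = a_i + B` then forces the classes to have three elements: `c`
indices with total length `4B` satisfy `∑ a_i + cB = 4B`, so positivity gives `c ≤ 3`, and the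
average class size is `3`.
-/

open scoped Finset

namespace disjointUnionGraph

variable {ι κ : Type*} {F : ι → Type*} {F' : κ → Type*}
  {Gs : ∀ i, SimpleGraph (F i)} {Hs : ∀ j, SimpleGraph (F' j)}

theorem adj_iff {x y : Σ i, F i} :
    (disjointUnionGraph Gs).Adj x y ↔
      ∃ (i : ι) (u v : F i), (Gs i).Adj u v ∧ x = ⟨i, u⟩ ∧ y = ⟨i, v⟩ := by
  rw [disjointUnionGraph, SimpleGraph.fromRel_adj]
  constructor
  · rintro ⟨_, h | ⟨i, u, v, huv, rfl, rfl⟩⟩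
    · exact h
    · exact ⟨i, v, u, huv.symm, rfl, rfl⟩
  · rintro ⟨i, u, v, huv, rfl, rfl⟩
    exact ⟨sigma_mk_injective.ne huv.ne, Or.inl ⟨i, u, v, huv, rfl, rfl⟩⟩

variable (Gs) in
/-- The canonical homomorphism from a summand into the disjoint union. -/
def inclusion (i : ι) : Gs i →g disjointUnionGraph Gs where
  toFun := Sigma.mk i
  map_rel' {u v} huv := adj_iff.2 ⟨i, u, v, huv, rfl, rfl⟩

/-- The homomorphism of disjoint unions that maps the `i`-th summand to the `part i`-th summand
by `f i`. -/
def map (part : ι → κ) (f : ∀ i, Gs i →g Hs (part i)) :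
    disjointUnionGraph Gs →g disjointUnionGraph Hs where
  toFun := Sigma.map part fun i => f i
  map_rel' {x y} hxy := by
    obtain ⟨i, u, v, huv, rfl, rfl⟩ := adj_iff.1 hxy
    exact (inclusion Hs (part i)).map_adj ((f i).map_adj huv)

theorem fst_eq_of_adj {x y : Σ i, F i} (h : (disjointUnionGraph Gs).Adj x y) : x.1 = y.1 := by
  obtain ⟨i, u, v, -, rfl, rfl⟩ := adj_iff.1 h
  rfl

theorem fst_eq_of_reachable {x y : Σ i, F i} (h : (disjointUnionGraph Gs).Reachable x y) :
    x.1 = y.1 := by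
  obtain ⟨w⟩ := h
  induction w with
  | nil => rfl
  | cons hadj _ ih => exact (fst_eq_of_adj hadj).trans ih

theorem fst_hom_eq_of_preconnected (f : disjointUnionGraph Gs →g disjointUnionGraph Hs) {i : ι}
    (hi : (Gs i).Preconnected) (u v : F i) : (f ⟨i, u⟩).1 = (f ⟨i, v⟩).1 :=
  fst_eq_of_reachable (((hi u v).map (inclusion Gs i)).map f)

end disjointUnionGraph

/-- The translation by `c`, as a homomorphism from a path into a sufficiently long path. -/
def pathGraphShift {p q : ℕ} (c : ℕ) (h : c + p ≤ q) :
    SimpleGraph.pathGraph p →g SimpleGraph.pathGraph q where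
  toFun u := ⟨c + u, by omega⟩
  map_rel' {u v} huv := by
    rw [SimpleGraph.pathGraph_adj] at huv ⊢
    dsimp only
    omega

section Fiberwise

variable {ι κ : Type*} [Fintype ι] [DecidableEq κ]

theorem sum_card_fiber_eq_card_of_bijective {F : ι → Type*} {F' : κ → Type*}
    [∀ i, Fintype (F i)] [∀ j, Fintype (F' j)] {f : (Σ i, F i) → Σ j, F' j}
    (hf : Function.Bijective f) {part : ι → κ} (hpart : ∀ x, (f x).1 = part x.1) (j : κ) :
    ∑ i with part i = j, Fintype.card (F i) = Fintype.card (F' j) := by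
  have hcard : #(({i | part i = j} : Finset ι).sigma fun i => (Finset.univ : Finset (F i))) =
      #(({j} : Finset κ).sigma fun j => (Finset.univ : Finset (F' j))) :=
    Finset.card_equiv (Equiv.ofBijective f hf) fun x => by simp [hpart x]
  simpa [Finset.card_sigma] using hcard

theorem card_fiber_eq_of_card_fiber_le [Fintype κ] {k : ℕ} {part : ι → κ}
    (hcard : Fintype.card ι = k * Fintype.card κ) (hle : ∀ j, #{i | part i = j} ≤ k) (j : κ) :
    #{i | part i = j} = k := by
  have htotal : ∑ j, #{i | part i = j} = ∑ _j : κ, k := by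
    rw [← Finset.card_eq_sum_card_fiberwise fun _ _ => Finset.mem_coe.2 (Finset.mem_univ _),
      Finset.card_univ, hcard, Finset.sum_const, Finset.card_univ, smul_eq_mul, mul_comm]
  exact (Finset.sum_eq_sum_iff_of_le fun j _ => hle j).1 htotal j (Finset.mem_univ j)

end Fiberwise

section PathPacking

variable {ι κ : Type*}

theorem exists_offset_cover_range_sum (s : Finset ι) (p : ι → ℕ) :
    ∃ offset : ι → ℕ, (∀ i ∈ s, offset i + p i ≤ ∑ i ∈ s, p i) ∧
      ∀ k < ∑ i ∈ s, p i, ∃ i ∈ s, offset i ≤ k ∧ k < offset i + p i := by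
  classical
  induction s using Finset.induction_on with
  | empty => simp
  | insert b s hb ih =>
    obtain ⟨offset, hle, hcover⟩ := ih
    have hupdate : ∀ i ∈ s, Function.update offset b (∑ i ∈ s, p i) i = offset i := fun i hi =>
      Function.update_of_ne (ne_of_mem_of_not_mem hi hb) _ _
    refine ⟨Function.update offset b (∑ i ∈ s, p i), ?_, fun k hk => ?_⟩
    · rw [Finset.forall_mem_insert, Finset.sum_insert hb, Function.update_self]
      refine ⟨(add_comm _ _).le, fun i hi => ?_⟩
      rw [hupdate i hi]
      exact (hle i hi).trans (Nat.le_add_left _ _)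
    · rw [Finset.sum_insert hb] at hk
      rcases lt_or_ge k (∑ i ∈ s, p i) with hks | hks
      · obtain ⟨i, hi, hik⟩ := hcover k hks
        exact ⟨i, Finset.mem_insert_of_mem hi, by rwa [hupdate i hi]⟩
      · exact ⟨b, Finset.mem_insert_self b s, by rw [Function.update_self]; omega⟩

variable [Fintype ι] [DecidableEq κ] {p : ι → ℕ} {q : κ → ℕ}

theorem exists_surjective_hom_of_fiber_sum_eq {part : ι → κ}
    (hpart : ∀ j, ∑ i with part i = j, p i = q j) :
    ∃ f : disjointUnionGraph (fun i => SimpleGraph.pathGraph (p i)) →g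
        disjointUnionGraph (fun j => SimpleGraph.pathGraph (q j)), Function.Surjective f := by
  choose offset hle hcover using fun j : κ =>
    exists_offset_cover_range_sum ({i | part i = j} : Finset ι) p
  simp only [hpart, Finset.mem_filter_univ] at hle hcover
  refine ⟨disjointUnionGraph.map part fun i =>
    pathGraphShift (offset (part i) i) (hle (part i) i rfl), ?_⟩
  rintro ⟨j, k⟩
  obtain ⟨i, rfl, hle_k, hk_lt⟩ := hcover j k k.isLt
  exact ⟨⟨i, ⟨k - offset (part i) i, by omega⟩⟩,
    congrArg (Sigma.mk (part i)) (Fin.ext (Nat.add_sub_cancel' hle_k))⟩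

theorem exists_fiber_sum_eq_of_surjective_hom [Fintype κ] (hp : ∀ i, 0 < p i)
    (htotal : ∑ i, p i = ∑ j, q j)
    (f : disjointUnionGraph (fun i => SimpleGraph.pathGraph (p i)) →g
      disjointUnionGraph (fun j => SimpleGraph.pathGraph (q j)))
    (hf : Function.Surjective f) :
    ∃ part : ι → κ, ∀ j, ∑ i with part i = j, p i = q j := by
  have hbij : Function.Bijective f :=
    (Fintype.bijective_iff_surjective_and_card f).2 ⟨hf, by simpa using htotal⟩
  refine ⟨fun i => (f ⟨i, ⟨0, hp i⟩⟩).1, fun j => ?_⟩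
  simpa only [Fintype.card_fin] using sum_card_fiber_eq_card_of_bijective hbij (fun x =>
    disjointUnionGraph.fst_hom_eq_of_preconnected f (SimpleGraph.pathGraph_preconnected _) _ _) j

theorem exists_surjective_hom_pathGraphs_iff [Fintype κ] (hp : ∀ i, 0 < p i)
    (htotal : ∑ i, p i = ∑ j, q j) :
    (∃ f : disjointUnionGraph (fun i => SimpleGraph.pathGraph (p i)) →g
        disjointUnionGraph (fun j => SimpleGraph.pathGraph (q j)), Function.Surjective f) ↔
      ∃ part : ι → κ, ∀ j, ∑ i with part i = j, p i = q j :=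
  ⟨fun ⟨f, hf⟩ => exists_fiber_sum_eq_of_surjective_hom hp htotal f hf,
    fun ⟨_, hpart⟩ => exists_surjective_hom_of_fiber_sum_eq hpart⟩

end PathPacking

section EquitablePartition

variable {ι κ : Type*} {k B : ℕ} {a : ι → ℕ}

theorem sum_add_const_eq_sum_add_card_mul (s : Finset ι) (a : ι → ℕ) (B : ℕ) :
    ∑ i ∈ s, (a i + B) = ∑ i ∈ s, a i + #s * B := by
  rw [Finset.sum_add_distrib, Finset.sum_const, smul_eq_mul]

theorem card_le_of_sum_add_const_eq {s : Finset ι} (hpos : ∀ i ∈ s, 0 < a i)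
    (hs : ∑ i ∈ s, (a i + B) = (k + 1) * B) : #s ≤ k := by
  by_contra! hk
  have hsum_pos : 0 < ∑ i ∈ s, a i := Finset.sum_pos hpos (Finset.card_pos.1 (by omega))
  have hmul : (k + 1) * B ≤ #s * B := Nat.mul_le_mul_right B hk
  rw [sum_add_const_eq_sum_add_card_mul] at hs
  omega

theorem forall_card_fiber_eq_and_sum_eq_iff [Fintype ι] [Fintype κ] [DecidableEq κ]
    (hcard : Fintype.card ι = k * Fintype.card κ) (hpos : ∀ i, 0 < a i) {part : ι → κ} :
    (∀ j, #{i | part i = j} = k ∧ ∑ i with part i = j, a i = B) ↔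
      ∀ j, ∑ i with part i = j, (a i + B) = (k + 1) * B := by
  constructor
  · intro h j
    rw [sum_add_const_eq_sum_add_card_mul, (h j).1, (h j).2]
    ring
  · intro h j
    have hfiber : #{i | part i = j} = k := card_fiber_eq_of_card_fiber_le hcard
      (fun j => card_le_of_sum_add_const_eq (fun i _ => hpos i) (h j)) j
    have hsum := h j
    rw [sum_add_const_eq_sum_add_card_mul, hfiber] at hsum
    exact ⟨hfiber, by linarith⟩

end EquitablePartition

theorem threePartition_iff_surjective_hom_linear_forests_general {ι κ : Type*} [Fintype ι]
    [Fintype κ] [DecidableEq κ] (k B : ℕ) (a : ι → ℕ)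
    (hcard : Fintype.card ι = k * Fintype.card κ) (hsum : ∑ i, a i = Fintype.card κ * B)
    (hpos : ∀ i, 0 < a i) :
    (∃ part : ι → κ, ∀ j, #{i | part i = j} = k ∧ ∑ i with part i = j, a i = B) ↔
      ∃ f : disjointUnionGraph (fun i => SimpleGraph.pathGraph (a i + B)) →g
            disjointUnionGraph (fun _ : κ => SimpleGraph.pathGraph ((k + 1) * B)),
        Function.Surjective f := by
  have htotal : ∑ i, (a i + B) = ∑ _j : κ, (k + 1) * B := by
    rw [sum_add_const_eq_sum_add_card_mul, hsum, Finset.card_univ, hcard, Finset.sum_const,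
      Finset.card_univ, smul_eq_mul]
    ring
  rw [exists_surjective_hom_pathGraphs_iff (fun i => Nat.add_pos_left (hpos i) B) htotal]
  exact exists_congr fun _ => forall_card_fiber_eq_and_sum_eq_iff hcard hpos

/-- Let `A = {a₁, …, a_n}` be an `(m,B)`-positive multiset. Set
`pᵢ = aᵢ + B` and `q = 4B`. Let `G` be the linear forest `P_{p₁} + … + P_{p_n}` and `H`
the disjoint union of `m` copies of `P_q`. Then `A` has a 3-partition if and only if
there exists a surjective homomorphism from `G` to `H`. -/
theorem threePartition_iff_surjective_hom_linear_forests
    (n m B : ℕ) (a : Fin n → ℕ) (hn : n = 3 * m) (hsum : ∑ i, a i = m * B)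
    (hpos : ∀ i, 0 < a i) :
    HasThreePartition n m B a ↔
      ∃ f : disjointUnionGraph (fun i : Fin n => SimpleGraph.pathGraph (a i + B)) →g
            disjointUnionGraph (fun _ : Fin m => SimpleGraph.pathGraph (4 * B)),
        Function.Surjective f := by
  exact threePartition_iff_surjective_hom_linear_forests_general 3 B a (by simpa using hn)
    (by simpa using hsum) hpos
end

section
/- Let A = {a_1, …, a_n} be an (m,B)-positive multiset of integers. Set p_i = a_i + B for i = 1, …, n and q = 4B. Let G be the tree with a root vertex w adjacent to vertices v_1, …, v_n, where each v_i is additionally adjacent to p_i leaves u_1^{(i)}, …, u_{p_i}^{(i)}. Let H be the tree with a root vertex z adjacent to vertices y_1, …, y_m, where each y_j is additionally adjacent to q leaves x_1^{(j)}, …, x_q^{(j)}. Then A has a 3-partition if and only if there exists a surjective homomorphism from G to H. -/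
/-- The tree with a root `none` adjacent to vertices `some ⟨i, none⟩` for `i : ι`, where
each vertex `some ⟨i, none⟩` is additionally adjacent to the `c i` leaves
`some ⟨i, some h⟩` (`h : Fin (c i)`). -/
def spiderTree {ι : Type*} (c : ι → ℕ) :
    SimpleGraph (Option ((i : ι) × Option (Fin (c i)))) :=
  SimpleGraph.fromRel
    (fun x y =>
      (x = none ∧ ∃ i : ι, y = some ⟨i, none⟩) ∨
      (∃ (i : ι) (h : Fin (c i)), x = some ⟨i, none⟩ ∧ y = some ⟨i, some h⟩))

/-!
Every vertex of a spider tree is within distance two of the root, whereas leaves below different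
children are at distance four. Hence a surjective homomorphism onto a spider tree with at least two
children, each having a leaf, fixes the root; it then sends children to children, say by `g`, and
the leaves below `j` are covered only by leaves below `g ⁻¹' {j}`. So `g` exists with
`4 * B ≤ ∑ i with g i = j, (a i + B)` for all `j`. Both sides add up to `4 * m * B`, so equality
holds throughout. A fiber with four or more elements would exceed `4 * B` because the `a i` are
positive, so all `m` fibers have at most, and hence (there are `3 * m` indices) exactly, three
elements. When `m ≤ 1`, the unique map to `Fin m` is a 3-partition.
-/

open Finset Function

namespace spiderTree

section Adj

variable {ι : Type*} {c : ι → ℕ} {i : ι} {y : Option ((i : ι) × Option (Fin (c i)))}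

theorem root_adj_iff : (spiderTree c).Adj none y ↔ ∃ i, y = some ⟨i, none⟩ := by
  simp only [spiderTree, SimpleGraph.fromRel_adj]
  aesop

theorem child_adj_iff :
    (spiderTree c).Adj (some ⟨i, none⟩) y ↔ y = none ∨ ∃ k, y = some ⟨i, some k⟩ := by
  simp only [spiderTree, SimpleGraph.fromRel_adj]
  aesop

theorem leaf_adj_iff {k : Fin (c i)} :
    (spiderTree c).Adj (some ⟨i, some k⟩) y ↔ y = some ⟨i, none⟩ := by
  simp only [spiderTree, SimpleGraph.fromRel_adj]
  aesop

theorem root_adj_child (i : ι) : (spiderTree c).Adj none (some ⟨i, none⟩) :=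
  root_adj_iff.2 ⟨i, rfl⟩

theorem child_adj_leaf (k : Fin (c i)) :
    (spiderTree c).Adj (some ⟨i, none⟩) (some ⟨i, some k⟩) :=
  child_adj_iff.2 (.inr ⟨k, rfl⟩)

end Adj

variable {ι κ : Type*} {c : ι → ℕ} {d : κ → ℕ}

/-- The homomorphism of spider trees fixing the root that acts by `g` on the children of the root
and by `φ i` on the leaves below the child `i`. -/
def mapHom (g : ι → κ) (φ : ∀ i, Fin (c i) → Fin (d (g i))) : spiderTree c →g spiderTree d where
  toFun := Option.map (Sigma.map g fun i => Option.map (φ i))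
  map_rel' {x y} hxy := by
    rcases x with _ | ⟨i, _ | k⟩
    · obtain ⟨i, rfl⟩ := root_adj_iff.1 hxy
      exact root_adj_child (g i)
    · obtain rfl | ⟨k, rfl⟩ := child_adj_iff.1 hxy
      · exact (root_adj_child (g i)).symm
      · exact child_adj_leaf (φ i k)
    · obtain rfl := leaf_adj_iff.1 hxy
      exact (child_adj_leaf (φ i k)).symm

theorem mapHom_surjective {g : ι → κ} {φ : ∀ i, Fin (c i) → Fin (d (g i))} (hg : Surjective g)
    (hφ : Surjective (Sigma.map g φ : (Σ i, Fin (c i)) → Σ j, Fin (d j))) :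
    Surjective (mapHom g φ) := by
  rintro (_ | ⟨j, _ | l⟩)
  · exact ⟨none, rfl⟩
  · obtain ⟨i, rfl⟩ := hg j
    exact ⟨some ⟨i, none⟩, rfl⟩
  · obtain ⟨⟨i, k⟩, hik⟩ := hφ ⟨j, l⟩
    cases hik
    exact ⟨some ⟨i, some k⟩, rfl⟩

theorem map_root_of_map_eq_leaf (f : spiderTree c →g spiderTree d)
    {x : Option ((i : ι) × Option (Fin (c i)))} {j : κ} {l : Fin (d j)}
    (hx : f x = some ⟨j, some l⟩) : f none = none ∨ ∃ s, f none = some ⟨j, s⟩ := by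
  rcases x with _ | ⟨i, _ | k⟩
  · exact .inr ⟨some l, hx⟩
  · have hroot := f.map_adj (root_adj_child i).symm
    rw [hx, leaf_adj_iff] at hroot
    exact .inr ⟨none, hroot⟩
  · have hchild := f.map_adj (child_adj_leaf k).symm
    rw [hx, leaf_adj_iff] at hchild
    have hroot := f.map_adj (root_adj_child i).symm
    rw [hchild, child_adj_iff] at hroot
    exact hroot.imp_right fun ⟨l', hl'⟩ => ⟨some l', hl'⟩

theorem map_root_of_surjective [Nontrivial κ] (hd : ∀ j, 0 < d j)
    {f : spiderTree c →g spiderTree d} (hf : Surjective f) : f none = none := by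
  have root_or_below (j : κ) : f none = none ∨ ∃ s, f none = some ⟨j, s⟩ :=
    map_root_of_map_eq_leaf f (hf (some ⟨j, some ⟨0, hd j⟩⟩)).choose_spec
  obtain ⟨j, j', hne⟩ := exists_pair_ne κ
  obtain hroot | ⟨s, hs⟩ := root_or_below j
  · exact hroot
  obtain hroot | ⟨s', hs'⟩ := root_or_below j'
  · exact hroot
  · exact absurd (congrArg Sigma.fst (Option.some.inj (hs.symm.trans hs'))) hne

theorem exists_map_child_eq {f : spiderTree c →g spiderTree d} (hroot : f none = none) :
    ∃ g : ι → κ, ∀ i, f (some ⟨i, none⟩) = some ⟨g i, none⟩ := by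
  have (i : ι) : ∃ j, f (some ⟨i, none⟩) = some ⟨j, none⟩ :=
    root_adj_iff.1 (hroot ▸ f.map_adj (root_adj_child i))
  exact Classical.skolem.1 this

theorem exists_leaf_of_map_eq_leaf {f : spiderTree c →g spiderTree d} (hroot : f none = none)
    {g : ι → κ} (hg : ∀ i, f (some ⟨i, none⟩) = some ⟨g i, none⟩)
    {x : Option ((i : ι) × Option (Fin (c i)))} {j : κ} {l : Fin (d j)}
    (hx : f x = some ⟨j, some l⟩) : ∃ i k, g i = j ∧ x = some ⟨i, some k⟩ := by
  rcases x with _ | ⟨i, _ | k⟩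
  · simp [hroot] at hx
  · cases (hg i).symm.trans hx
  · have hadj := f.map_adj (child_adj_leaf k).symm
    rw [hx, leaf_adj_iff, hg, Option.some.injEq, Sigma.mk.injEq] at hadj
    exact ⟨i, k, hadj.1, rfl⟩

variable [Fintype ι] [DecidableEq κ]

theorem card_leaves_over (c : ι → ℕ) (g : ι → κ) (j : κ) :
    Fintype.card {x : Σ i, Fin (c i) // g x.1 = j} = ∑ i with g i = j, c i := by
  have : ({x | g x.1 = j} : Finset (Σ i, Fin (c i))) =
      ({i | g i = j} : Finset ι).sigma fun _ => univ := by
    ext; simp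
  simp [Fintype.card_subtype, this]

theorem exists_surjective_hom_of_le_sum (hd : ∀ j, 0 < d j) {g : ι → κ}
    (hg : ∀ j, d j ≤ ∑ i with g i = j, c i) :
    ∃ f : spiderTree c →g spiderTree d, Surjective f := by
  have exists_leaf_map (j : κ) :
      ∃ φ : {x : Σ i, Fin (c i) // g x.1 = j} → Fin (d j), Surjective φ := by
    have : Nonempty (Fin (d j)) := ⟨0, hd j⟩
    obtain ⟨e⟩ : Nonempty (Fin (d j) ↪ {x : Σ i, Fin (c i) // g x.1 = j}) :=
      Embedding.nonempty_of_card_le (by simpa [card_leaves_over] using hg j)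
    exact ⟨invFun e, invFun_surjective e.injective⟩
  choose φ hφ using exists_leaf_map
  refine ⟨mapHom g fun i k => φ (g i) ⟨⟨i, k⟩, rfl⟩, mapHom_surjective (fun j => ?_) ?_⟩
  · obtain ⟨x, -⟩ := hφ j ⟨0, hd j⟩
    exact ⟨x.1.1, x.2⟩
  · rintro ⟨j, l⟩
    obtain ⟨⟨⟨i, k⟩, rfl⟩, rfl⟩ := hφ j l
    exact ⟨⟨i, k⟩, rfl⟩

theorem exists_le_sum_of_surjective_hom [Nontrivial κ] (hd : ∀ j, 0 < d j)
    {f : spiderTree c →g spiderTree d} (hf : Surjective f) :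
    ∃ g : ι → κ, ∀ j, d j ≤ ∑ i with g i = j, c i := by
  have hroot := map_root_of_surjective hd hf
  obtain ⟨g, hg⟩ := exists_map_child_eq hroot
  refine ⟨g, fun j => ?_⟩
  have exists_leaf_over (l : Fin (d j)) : ∃ x : {x : Σ i, Fin (c i) // g x.1 = j},
      f (some ⟨x.1.1, some x.1.2⟩) = some ⟨j, some l⟩ := by
    obtain ⟨x, hx⟩ := hf (some ⟨j, some l⟩)
    obtain ⟨i, k, hi, rfl⟩ := exists_leaf_of_map_eq_leaf hroot hg hx
    exact ⟨⟨⟨i, k⟩, hi⟩, hx⟩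
  choose x hx using exists_leaf_over
  have x_injective : Injective x := fun l l' h => by
    have leaf_eq := hx l
    rw [h, hx l'] at leaf_eq
    simpa using leaf_eq.symm
  simpa [card_leaves_over] using Fintype.card_le_of_injective x x_injective

end spiderTree

section Fibers

variable {ι κ : Type*} {k B : ℕ} {a : ι → ℕ} {g : ι → κ}

theorem card_le_of_sum_add_const_le {s : Finset ι} (hpos : ∀ i ∈ s, 0 < a i)
    (hs : ∑ i ∈ s, (a i + B) ≤ (k + 1) * B) : #s ≤ k := by
  by_contra! hlt
  have sum_pos : 0 < ∑ i ∈ s, a i :=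
    Finset.sum_pos hpos (card_pos.1 (Nat.zero_lt_of_lt hlt))
  have : (k + 1) * B ≤ #s * B := Nat.mul_le_mul_right B hlt
  rw [sum_add_distrib, sum_const, smul_eq_mul] at hs
  lia

variable [Fintype ι] [Fintype κ] [DecidableEq κ]

theorem sum_add_const_fiber_eq_of_le (hcard : Fintype.card ι = k * Fintype.card κ)
    (hsum : ∑ i, a i = Fintype.card κ * B)
    (hle : ∀ j, (k + 1) * B ≤ ∑ i with g i = j, (a i + B)) (j : κ) :
    ∑ i with g i = j, (a i + B) = (k + 1) * B := by
  have total : ∑ _j : κ, (k + 1) * B = ∑ j, ∑ i with g i = j, (a i + B) := by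
    rw [sum_fiberwise, sum_add_distrib, hsum]
    simp only [sum_const, card_univ, smul_eq_mul, hcard]
    ring
  exact ((sum_eq_sum_iff_of_le fun j _ => hle j).1 total j (mem_univ j)).symm

theorem card_fiber_eq_of_le (hcard : Fintype.card ι = k * Fintype.card κ)
    (hle : ∀ j, #{i | g i = j} ≤ k) (j : κ) : #{i | g i = j} = k := by
  have total : ∑ j, #{i | g i = j} = ∑ _j : κ, k := by
    rw [← card_eq_sum_card_fiberwise fun _ _ => mem_coe.2 (mem_univ _)]
    simp [hcard, mul_comm]
  exact (sum_eq_sum_iff_of_le fun j _ => hle j).1 total j (mem_univ j)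

theorem card_fiber_eq_and_sum_fiber_eq_of_le (hcard : Fintype.card ι = k * Fintype.card κ)
    (hsum : ∑ i, a i = Fintype.card κ * B) (hpos : ∀ i, 0 < a i)
    (hle : ∀ j, (k + 1) * B ≤ ∑ i with g i = j, (a i + B)) (j : κ) :
    #{i | g i = j} = k ∧ ∑ i with g i = j, a i = B := by
  have fiber_sum := sum_add_const_fiber_eq_of_le hcard hsum hle
  have fiber_card : #{i | g i = j} = k :=
    card_fiber_eq_of_le hcard
      (fun j => card_le_of_sum_add_const_le (fun i _ => hpos i) (fiber_sum j).le) j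
  refine ⟨fiber_card, ?_⟩
  have := fiber_sum j
  rw [sum_add_distrib, sum_const, fiber_card, smul_eq_mul] at this
  lia

end Fibers

theorem hasThreePartition_of_le_one {n m B : ℕ} {a : Fin n → ℕ} (hm : m ≤ 1) (hn : n = 3 * m)
    (hsum : ∑ i, a i = m * B) : HasThreePartition n m B a := by
  obtain rfl | rfl := Nat.le_one_iff_eq_zero_or_eq_one.1 hm
  · subst hn
    exact ⟨Fin.elim0, Fin.rec0⟩
  · refine ⟨0, fun j => ?_⟩
    simp [Subsingleton.elim j 0, hn, hsum]

/-- Let `A = {a₁, …, a_n}` be an `(m,B)`-positive multiset. Set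
`pᵢ = aᵢ + B` and `q = 4B`. Let `G` be the tree with a root `w` adjacent to `v₁, …, v_n`,
where each `vᵢ` is additionally adjacent to `pᵢ` leaves, and let `H` be the tree with a
root `z` adjacent to `y₁, …, y_m`, where each `y_j` is additionally adjacent to `q`
leaves. Then `A` has a 3-partition if and only if there exists a surjective
homomorphism from `G` to `H`. -/
theorem threePartition_iff_surjective_hom_trees
    (n m B : ℕ) (a : Fin n → ℕ) (hn : n = 3 * m) (hsum : ∑ i, a i = m * B)
    (hpos : ∀ i, 0 < a i) :
    HasThreePartition n m B a ↔
      ∃ f : spiderTree (fun i : Fin n => a i + B) →g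
            spiderTree (fun _ : Fin m => 4 * B),
        Function.Surjective f := by
  have hB (j : Fin m) : 0 < 4 * B := by
    have : 0 < ∑ i, a i := sum_pos (fun i _ => hpos i) ⟨⟨0, by have := j.pos; lia⟩, mem_univ _⟩
    have : 0 < B := Nat.pos_of_mul_pos_left (hsum ▸ this)
    lia
  constructor
  · rintro ⟨g, hg⟩
    refine spiderTree.exists_surjective_hom_of_le_sum hB (g := g) fun j => ?_
    rw [sum_add_distrib, sum_const, (hg j).1, (hg j).2, smul_eq_mul]
    lia
  · rintro ⟨f, hf⟩
    obtain hm | hm := le_or_gt m 1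
    · exact hasThreePartition_of_le_one hm hn hsum
    · have : Nontrivial (Fin m) := Fin.nontrivial_iff_two_le.2 hm
      obtain ⟨g, hg⟩ := spiderTree.exists_le_sum_of_surjective_hom hB hf
      exact ⟨g, card_fiber_eq_and_sum_fiber_eq_of_le (by simpa using hn) (by simpa using hsum)
        hpos hg⟩
end

section
/- Let A = {a_1, …, a_n} be an (m,B)-positive multiset of integers. Set p_i = 6m²(a_i + B) for i = 1, …, n and q = 24m²B. Let G be the connected graph obtained from disjoint cliques U_1, …, U_n with |U_i| = p_i, where for i = 2, …, n a designated vertex of U_{i−1} is joined to a designated vertex of U_i by a path of length 2m − 1 whose internal vertices are new. Let H be the connected graph obtained from disjoint cliques X^{(1)}, …, X^{(m)}, each of size q, where for j = 2, …, m a designated vertex of X^{(j−1)} is joined by an edge to a designated vertex of X^{(j)}. Then A has a 3-partition if and only if there exists a surjective homomorphism from G to H. -/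
/-- Vertex type for the guest graph of Statement 11: the `n` disjoint cliques
`Uᵢ ≃ Fin (p i)`, together with, for each index `i` with `i + 1 < n`, the `2m - 2`
internal vertices of the connecting path from clique `i` to clique `i + 1`. -/
abbrev IntervalGuestVert (n m : ℕ) (p : Fin n → ℕ) : Type :=
  (Σ i : Fin n, Fin (p i)) ⊕ ({k : Fin n // k.val + 1 < n} × Fin (2 * m - 2))

/-- The `t`-th vertex (`0 ≤ t ≤ 2m - 1`) of the connecting path from clique `i` to
clique `i + 1`: position `0` is the designated exit vertex `e i` of clique `i`, position
`2m - 1` is the designated entry vertex `s (i+1)` of clique `i + 1`, and the positions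
in between are the new internal vertices. -/
def connVert (n m : ℕ) (p : Fin n → ℕ) (e s : ∀ i : Fin n, Fin (p i))
    (i : {k : Fin n // k.val + 1 < n}) (t : ℕ) : IntervalGuestVert n m p :=
  if t = 0 then Sum.inl ⟨i.1, e i.1⟩
  else if t = 2 * m - 1 then Sum.inl ⟨⟨i.1.val + 1, i.2⟩, s ⟨i.1.val + 1, i.2⟩⟩
  else if h : t - 1 < 2 * m - 2 then Sum.inr (i, ⟨t - 1, h⟩)
  else Sum.inl ⟨i.1, e i.1⟩

/-- The connected graph obtained from disjoint cliques `U₁, …, U_n` with `|Uᵢ| = p i`,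
where for each consecutive pair of cliques the designated vertex `e i` of `Uᵢ` is joined
to the designated vertex `s (i+1)` of `Uᵢ₊₁` by a path of length `2m - 1` whose internal
vertices are new. -/
def intervalGuest (n m : ℕ) (p : Fin n → ℕ) (e s : ∀ i : Fin n, Fin (p i)) :
    SimpleGraph (IntervalGuestVert n m p) :=
  SimpleGraph.fromRel
    (fun x y =>
      (∃ (i : Fin n) (u v : Fin (p i)), x = Sum.inl ⟨i, u⟩ ∧ y = Sum.inl ⟨i, v⟩) ∨
      (∃ (i : {k : Fin n // k.val + 1 < n}) (t : ℕ), t + 1 ≤ 2 * m - 1 ∧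
        x = connVert n m p e s i t ∧ y = connVert n m p e s i (t + 1)))

/-- The connected graph obtained from disjoint cliques `X⁽¹⁾, …, X⁽ᵐ⁾`, each of size `q`,
where for each consecutive pair of cliques the designated vertex `eH j` of `X⁽ʲ⁾` is
joined by an edge to the designated vertex `sH (j+1)` of `X⁽ʲ⁺¹⁾`. -/
def intervalHost (m q : ℕ) (eH sH : Fin m → Fin q) : SimpleGraph (Fin m × Fin q) :=
  SimpleGraph.fromRel
    (fun x y =>
      (∃ (j : Fin m) (u v : Fin q), x = (j, u) ∧ y = (j, v)) ∨
      (∃ j j' : Fin m, j'.val = j.val + 1 ∧ x = (j, eH j) ∧ y = (j', sH j')))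

/-!
A clique on at least three vertices can only be mapped into a single block `X⁽ʲ⁾` of the host, so a
homomorphism assigns each `Uᵢ` to a block. The connecting paths have fewer than `6m²` internal
vertices in total, so if the homomorphism is surjective, dividing by `6m²` shows that the `aᵢ + B`
assigned to each block sum to at least `4B`. These sums add up to `4mB`, so all of them equal `4B`;
positivity of the `aᵢ` then forbids four cliques in one block, hence each block receives exactly
three, whose `aᵢ` sum to `B`. Conversely, a 3-partition lets the cliques tile the blocks exactly,
and the connecting paths can be routed because distinct host vertices are joined by a walk of
length exactly `2m - 1`.
-/

open Finset

section Fibers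

variable {α ι κ : Type*} [Fintype α] [DecidableEq ι]

theorem card_sigma_filter_fst (p : α → ℕ) (b : α → ι) (j : ι) :
    #{x : Σ i, Fin (p i) | b x.1 = j} = ∑ i with b i = j, p i := by
  have hsigma : (univ.filter fun x : Σ i, Fin (p i) => b x.1 = j) =
      (univ.filter fun i => b i = j).sigma fun _ => univ := by
    ext x
    simp
  simp [hsigma]

theorem exists_equiv_prod_of_sum_fiber_eq {q : ℕ} {p : α → ℕ} {b : α → ι}
    (h : ∀ j, ∑ i with b i = j, p i = q) :
    ∃ g : (Σ i, Fin (p i)) ≃ ι × Fin q, ∀ x, (g x).1 = b x.1 := by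
  have hcard (j : ι) : Fintype.card {x : Σ i, Fin (p i) // b x.1 = j} = q := by
    rw [Fintype.card_subtype, card_sigma_filter_fst, h]
  let blocks := Equiv.sigmaCongrRight fun j => Fintype.equivFinOfCardEq (hcard j)
  exact ⟨((Equiv.sigmaFiberEquiv fun x => b x.1).symm.trans blocks).trans
    (Equiv.sigmaEquivProd ι (Fin q)), fun _ => rfl⟩

theorem card_le_sum_fiber_add_card {β : Type*} [Fintype β] [Fintype κ] {p : α → ℕ} {b : α → ι}
    {f : (Σ i, Fin (p i)) ⊕ β → ι × κ} (hf : Function.Surjective f)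
    (hb : ∀ x, (f (Sum.inl x)).1 = b x.1) (j : ι) :
    Fintype.card κ ≤ ∑ i with b i = j, p i + Fintype.card β := by
  let S : Finset ((Σ i, Fin (p i)) ⊕ β) := (univ.filter fun x => b x.1 = j).disjSum univ
  have hsurj : Set.SurjOn (Prod.snd ∘ f) S (univ : Finset κ) := by
    intro v _
    obtain ⟨y, hy⟩ := hf (j, v)
    refine ⟨y, ?_, congrArg Prod.snd hy⟩
    rcases y with x | y
    · simp [S, ← hb, hy]
    · simp [S]
  calc Fintype.card κ ≤ #S := card_le_card_of_surjOn _ hsurj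
    _ = _ := by rw [card_disjSum, card_sigma_filter_fst, card_univ]

theorem card_fiber_eq_and_sum_fiber_eq [Fintype ι] {k B : ℕ} {a : α → ℕ} {b : α → ι}
    (hcard : Fintype.card α = k * Fintype.card ι) (hsum : ∑ i, a i = Fintype.card ι * B)
    (hpos : ∀ i, 0 < a i) (hle : ∀ j, (k + 1) * B ≤ ∑ i with b i = j, (a i + B)) (j : ι) :
    #{i | b i = j} = k ∧ ∑ i with b i = j, a i = B := by
  have htotal : ∑ _j : ι, (k + 1) * B = ∑ j, ∑ i with b i = j, (a i + B) := by
    rw [sum_fiberwise, sum_add_distrib, hsum, sum_const, sum_const, card_univ, card_univ, hcard]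
    simp only [smul_eq_mul]
    ring
  have hfiber (j : ι) : (k + 1) * B = ∑ i with b i = j, a i + #{i | b i = j} * B := by
    have heq := (sum_eq_sum_iff_of_le fun j _ => hle j).1 htotal j (mem_univ j)
    rwa [sum_add_distrib, sum_const, smul_eq_mul] at heq
  have hcard_le (j : ι) : #{i | b i = j} ≤ k := by
    by_contra! hlt
    have hsum_pos : 0 < ∑ i with b i = j, a i :=
      sum_pos (fun i _ => hpos i) (card_pos.1 (Nat.zero_lt_of_lt hlt))
    have hmul : (k + 1) * B ≤ #{i | b i = j} * B := Nat.mul_le_mul_right B hlt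
    have := hfiber j
    omega
  have hcard_total : ∑ j, #{i | b i = j} = ∑ _j : ι, k := by
    rw [← card_eq_sum_card_fiberwise (fun i _ => mem_univ (b i)), card_univ, hcard, sum_const,
      card_univ, smul_eq_mul, mul_comm]
  have hcard_eq : #{i | b i = j} = k :=
    (sum_eq_sum_iff_of_le fun j _ => hcard_le j).1 hcard_total j (mem_univ j)
  refine ⟨hcard_eq, ?_⟩
  have := hfiber j
  rw [hcard_eq, add_mul, one_mul] at this
  omega

end Fibers

theorem exists_walk_length_add_two_mul {V : Type*} {G : SimpleGraph V} {x y z : V}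
    (w : G.Walk x y) (h : G.Adj x z) (k : ℕ) :
    ∃ w' : G.Walk x y, w'.length = w.length + 2 * k := by
  induction k with
  | zero => exact ⟨w, rfl⟩
  | succ k ih =>
    obtain ⟨w', hw'⟩ := ih
    exact ⟨.cons h (.cons h.symm w'), by simp only [SimpleGraph.Walk.length_cons, hw']; ring⟩

section Host

variable {m q : ℕ} {eH sH : Fin m → Fin q} {x y z : Fin m × Fin q} {j j' : Fin m}

theorem intervalHost_adj_iff :
    (intervalHost m q eH sH).Adj x y ↔ x ≠ y ∧
      (x.1 = y.1 ∨ (y.1.val = x.1.val + 1 ∧ x.2 = eH x.1 ∧ y.2 = sH y.1) ∨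
        (x.1.val = y.1.val + 1 ∧ y.2 = eH y.1 ∧ x.2 = sH x.1)) := by
  obtain ⟨j, u⟩ := x
  obtain ⟨j', v⟩ := y
  simp only [intervalHost, SimpleGraph.fromRel_adj, Prod.mk.injEq]
  refine and_congr_right fun _ => ⟨?_, ?_⟩
  · rintro ((⟨_, _, _, ⟨rfl, rfl⟩, rfl, rfl⟩ | ⟨_, _, h, ⟨rfl, rfl⟩, rfl, rfl⟩) |
      (⟨_, _, _, ⟨rfl, rfl⟩, rfl, rfl⟩ | ⟨_, _, h, ⟨rfl, rfl⟩, rfl, rfl⟩))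
    · exact .inl rfl
    · exact .inr (.inl ⟨h, rfl, rfl⟩)
    · exact .inl rfl
    · exact .inr (.inr ⟨h, rfl, rfl⟩)
  · rintro (rfl | ⟨h, rfl, rfl⟩ | ⟨h, rfl, rfl⟩)
    · exact .inl (.inl ⟨j, u, v, ⟨rfl, rfl⟩, rfl, rfl⟩)
    · exact .inl (.inr ⟨j, j', h, ⟨rfl, rfl⟩, rfl, rfl⟩)
    · exact .inr (.inr ⟨j', j, h, ⟨rfl, rfl⟩, rfl, rfl⟩)

theorem intervalHost_adj_of_ne (j : Fin m) {u v : Fin q} (h : u ≠ v) :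
    (intervalHost m q eH sH).Adj (j, u) (j, v) :=
  intervalHost_adj_iff.2 ⟨fun h' => h (congrArg Prod.snd h'), .inl rfl⟩

theorem intervalHost_adj_bridge (h : j'.val = j.val + 1) :
    (intervalHost m q eH sH).Adj (j, eH j) (j', sH j') :=
  intervalHost_adj_iff.2 ⟨fun h' => by simp [(Prod.mk.inj h').1] at h, .inr (.inl ⟨h, rfl, rfl⟩)⟩

theorem intervalHost_eq_of_adj_of_fst_eq (hxz : (intervalHost m q eH sH).Adj x z)
    (hyz : (intervalHost m q eH sH).Adj y z) (hxy : x.1 = y.1) (hne : x.1 ≠ z.1) : x = y := by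
  rw [intervalHost_adj_iff] at hxz hyz
  refine Prod.ext hxy ?_
  rcases hxz.2.resolve_left hne with ⟨h, hx, -⟩ | ⟨h, -, hx⟩ <;>
  rcases hyz.2.resolve_left (hxy ▸ hne) with ⟨h', hy, -⟩ | ⟨h', -, hy⟩
  · rw [hx, hy, hxy]
  · omega
  · omega
  · rw [hx, hy, hxy]

theorem intervalHost_fst_eq_of_triangle (hxy : (intervalHost m q eH sH).Adj x y)
    (hxz : (intervalHost m q eH sH).Adj x z) (hyz : (intervalHost m q eH sH).Adj y z) :
    x.1 = y.1 := by
  by_contra hne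
  -- The block indices of `x`, `y`, `z` pairwise differ by at most one, so two of them coincide.
  have hz : z.1 = x.1 ∨ z.1 = y.1 := by
    have hxy' := (intervalHost_adj_iff.1 hxy).2
    have hxz' := (intervalHost_adj_iff.1 hxz).2
    have hyz' := (intervalHost_adj_iff.1 hyz).2
    omega
  rcases hz with hz | hz
  · exact hxz.ne (intervalHost_eq_of_adj_of_fst_eq hxy hyz.symm hz.symm hne)
  · exact hyz.ne (intervalHost_eq_of_adj_of_fst_eq hxy.symm hxz.symm hz.symm (Ne.symm hne))

theorem intervalHost_exists_walk_length_two_in_block (hq : 2 < q) (j : Fin m) (u v : Fin q) :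
    ∃ w : (intervalHost m q eH sH).Walk (j, u) (j, v), w.length = 2 := by
  obtain ⟨t, htu, htv⟩ := Fin.exists_ne_and_ne_of_two_lt u v hq
  exact ⟨.cons (intervalHost_adj_of_ne j htu.symm) (intervalHost_adj_of_ne j htv).toWalk, rfl⟩

theorem intervalHost_exists_walk_length_two_to_next_block (hq : 1 < q)
    (hj : j'.val = j.val + 1) (u : Fin q) :
    ∃ v, ∃ w : (intervalHost m q eH sH).Walk (j, u) (j', v), w.length = 2 := by
  by_cases hu : u = eH j
  · subst hu
    have : Nontrivial (Fin q) := Fin.nontrivial_iff_two_le.2 hq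
    obtain ⟨v, hv⟩ := exists_ne (sH j')
    exact ⟨v, .cons (intervalHost_adj_bridge hj) (intervalHost_adj_of_ne j' hv.symm).toWalk, rfl⟩
  · exact ⟨sH j', .cons (intervalHost_adj_of_ne j hu) (intervalHost_adj_bridge hj).toWalk, rfl⟩

theorem intervalHost_exists_walk_length_three_to_next_block (hq : 2 < q) (hj : j'.val = j.val + 1)
    (u v : Fin q) : ∃ w : (intervalHost m q eH sH).Walk (j, u) (j', v), w.length = 3 := by
  by_cases hu : u = eH j
  · subst hu
    obtain ⟨w, hw⟩ := intervalHost_exists_walk_length_two_in_block hq j' (sH j') v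
    exact ⟨.cons (intervalHost_adj_bridge hj) w, by rw [SimpleGraph.Walk.length_cons, hw]⟩
  by_cases hv : sH j' = v
  · subst hv
    obtain ⟨w, hw⟩ := intervalHost_exists_walk_length_two_in_block hq j u (eH j)
    exact ⟨w.concat (intervalHost_adj_bridge hj), by rw [SimpleGraph.Walk.length_concat, hw]⟩
  · exact ⟨.cons (intervalHost_adj_of_ne j hu)
      (.cons (intervalHost_adj_bridge hj) (intervalHost_adj_of_ne j' hv).toWalk), rfl⟩

theorem intervalHost_exists_walk_length_two_mul_add_one (hq : 2 < q) {d : ℕ} (hd : 1 ≤ d) :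
    ∀ {j j' : Fin m} (u v : Fin q), j'.val = j.val + d →
      ∃ w : (intervalHost m q eH sH).Walk (j, u) (j', v), w.length = 2 * d + 1 := by
  induction d, hd using Nat.le_induction with
  | base => exact fun u v hj => intervalHost_exists_walk_length_three_to_next_block hq hj u v
  | succ d _ ih =>
    intro j j' u v hj
    let i : Fin m := ⟨j.val + 1, by omega⟩
    obtain ⟨t, w₁, hw₁⟩ := intervalHost_exists_walk_length_two_to_next_block (eH := eH) (sH := sH)
      (Nat.lt_of_succ_lt hq) (j' := i) rfl u
    obtain ⟨w₂, hw₂⟩ := ih t v (j := i) (j' := j') (by simp only [i]; omega)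
    exact ⟨w₁.append w₂, by rw [SimpleGraph.Walk.length_append, hw₁, hw₂]; ring⟩

theorem intervalHost_exists_walk_length_two_mul_sub_one (hq : 2 < q) (hxy : x ≠ y) :
    ∃ w : (intervalHost m q eH sH).Walk x y, w.length = 2 * m - 1 := by
  wlog hle : x.1.val ≤ y.1.val generalizing x y
  · obtain ⟨w, hw⟩ := this hxy.symm (by omega)
    exact ⟨w.reverse, by rw [SimpleGraph.Walk.length_reverse, hw]⟩
  obtain ⟨j, u⟩ := x
  obtain ⟨j', v⟩ := y
  obtain ⟨d, hd⟩ := Nat.exists_eq_add_of_le hle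
  obtain ⟨w, hw⟩ : ∃ w : (intervalHost m q eH sH).Walk (j, u) (j', v), w.length = 2 * d + 1 := by
    rcases Nat.eq_zero_or_pos d with rfl | hpos
    · obtain rfl : j' = j := Fin.ext hd
      exact ⟨(intervalHost_adj_of_ne j' fun h => hxy (by rw [h])).toWalk, rfl⟩
    · exact intervalHost_exists_walk_length_two_mul_add_one hq hpos u v hd
  -- `2 * d + 1` and `2 * m - 1` have the same parity, so going back and forth along an edge at the
  -- start makes up the difference.
  have : Nontrivial (Fin q) := Fin.nontrivial_iff_two_le.2 hq.le
  obtain ⟨t, ht⟩ := exists_ne u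
  obtain ⟨w', hw'⟩ :=
    exists_walk_length_add_two_mul w (intervalHost_adj_of_ne j ht.symm) (m - 1 - d)
  exact ⟨w', by simp only at hd; omega⟩

end Host

section Guest

variable {n m : ℕ} {p : Fin n → ℕ} {e s : ∀ i, Fin (p i)} {V : Type*} {H : SimpleGraph V}

theorem intervalGuest_adj_of_ne (i : Fin n) {u v : Fin (p i)} (h : u ≠ v) :
    (intervalGuest n m p e s).Adj (Sum.inl ⟨i, u⟩) (Sum.inl ⟨i, v⟩) := by
  rw [intervalGuest, SimpleGraph.fromRel_adj]
  exact ⟨by simpa using h, .inl (.inl ⟨i, u, v, rfl, rfl⟩)⟩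

theorem sumElim_apply_connVert {g : (Σ i, Fin (p i)) → V} {i : {k : Fin n // k.val + 1 < n}}
    {c : {k : Fin n // k.val + 1 < n} → ℕ → V} (hexit : c i 0 = g ⟨i.1, e i.1⟩)
    (hentry : c i (2 * m - 1) = g ⟨⟨i.1.val + 1, i.2⟩, s ⟨i.1.val + 1, i.2⟩⟩)
    {t : ℕ} (ht : t ≤ 2 * m - 1) :
    Sum.elim g (fun x => c x.1 (x.2.val + 1)) (connVert n m p e s i t) = c i t := by
  unfold connVert
  split_ifs with h0 hlast hmid
  · rw [h0, hexit, Sum.elim_inl]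
  · rw [hlast, hentry, Sum.elim_inl]
  · rw [Sum.elim_inr, Nat.sub_add_cancel (Nat.pos_of_ne_zero h0)]
  · omega

theorem intervalGuest_exists_hom_extending {g : (Σ i, Fin (p i)) → V}
    (hclique : ∀ i, ∀ u v : Fin (p i), u ≠ v → H.Adj (g ⟨i, u⟩) (g ⟨i, v⟩))
    (hpath : ∀ i : {k : Fin n // k.val + 1 < n}, ∃ w : H.Walk (g ⟨i.1, e i.1⟩)
      (g ⟨⟨i.1.val + 1, i.2⟩, s ⟨i.1.val + 1, i.2⟩⟩), w.length = 2 * m - 1) :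
    ∃ f : intervalGuest n m p e s →g H, ∀ x, f (Sum.inl x) = g x := by
  choose w hw using hpath
  let F : IntervalGuestVert n m p → V := Sum.elim g fun x => (w x.1).getVert (x.2.val + 1)
  have hF (i) {t : ℕ} (ht : t ≤ 2 * m - 1) : F (connVert n m p e s i t) = (w i).getVert t :=
    sumElim_apply_connVert (c := fun i => (w i).getVert) (w i).getVert_zero
      (by simp only [← hw i, SimpleGraph.Walk.getVert_length]) ht
  have hedge (i) {t : ℕ} (ht : t + 1 ≤ 2 * m - 1) :
      H.Adj (F (connVert n m p e s i t)) (F (connVert n m p e s i (t + 1))) := by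
    rw [hF i (Nat.le_of_succ_le ht), hF i ht]
    exact (w i).adj_getVert_succ (by rwa [hw])
  refine ⟨⟨F, fun {x y} hxy => ?_⟩, fun _ => rfl⟩
  rw [intervalGuest, SimpleGraph.fromRel_adj] at hxy
  obtain ⟨hne, (⟨i, u, v, rfl, rfl⟩ | ⟨i, t, ht, rfl, rfl⟩) |
    (⟨i, u, v, rfl, rfl⟩ | ⟨i, t, ht, rfl, rfl⟩)⟩ := hxy
  · exact hclique i u v fun h => hne (h ▸ rfl)
  · exact hedge i ht
  · exact (hclique i u v fun h => hne (h ▸ rfl)).symm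
  · exact (hedge i ht).symm

end Guest

section Hom

variable {n m q : ℕ} {p : Fin n → ℕ} {e s : ∀ i, Fin (p i)} {eH sH : Fin m → Fin q}

theorem exists_surjective_hom_of_sum_fiber_eq (hp : ∀ i, 2 < p i) {part : Fin n → Fin m}
    (hpart : ∀ j, ∑ i with part i = j, p i = q) :
    ∃ f : intervalGuest n m p e s →g intervalHost m q eH sH, Function.Surjective f := by
  obtain ⟨g, hg⟩ := exists_equiv_prod_of_sum_fiber_eq hpart
  have hq (i : Fin n) : 2 < q :=
    calc 2 < p i := hp i
      _ ≤ ∑ k with part k = part i, p k :=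
        single_le_sum (fun _ _ => Nat.zero_le _) (by simp)
      _ = q := hpart (part i)
  have hclique (i : Fin n) (u v : Fin (p i)) (huv : u ≠ v) :
      (intervalHost m q eH sH).Adj (g ⟨i, u⟩) (g ⟨i, v⟩) :=
    intervalHost_adj_iff.2 ⟨fun h => huv (by simpa using h), .inl (by rw [hg, hg])⟩
  obtain ⟨f, hf⟩ := intervalGuest_exists_hom_extending (e := e) (s := s) hclique fun i =>
    intervalHost_exists_walk_length_two_mul_sub_one (hq i.1) (g.injective.ne fun h => by
      simpa using congrArg (fun x => x.1.val) h)
  exact ⟨f, fun y => ⟨Sum.inl (g.symm y), by rw [hf, g.apply_symm_apply]⟩⟩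

theorem hom_fst_eq_of_clique {i : Fin n} (hp : 2 < p i)
    (f : intervalGuest n m p e s →g intervalHost m q eH sH) (u v : Fin (p i)) :
    (f (Sum.inl ⟨i, u⟩)).1 = (f (Sum.inl ⟨i, v⟩)).1 := by
  by_cases huv : u = v
  · rw [huv]
  obtain ⟨t, htu, htv⟩ := Fin.exists_ne_and_ne_of_two_lt u v hp
  exact intervalHost_fst_eq_of_triangle (f.map_adj (intervalGuest_adj_of_ne i huv))
    (f.map_adj (intervalGuest_adj_of_ne i htu.symm))
    (f.map_adj (intervalGuest_adj_of_ne i htv.symm))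

theorem exists_le_sum_fiber_add_card_of_surjective_hom (hp : ∀ i, 2 < p i)
    (f : intervalGuest n m p e s →g intervalHost m q eH sH) (hf : Function.Surjective f) :
    ∃ part : Fin n → Fin m, ∀ j, q ≤ ∑ i with part i = j, p i +
      Fintype.card ({k : Fin n // k.val + 1 < n} × Fin (2 * m - 2)) := by
  refine ⟨fun i => (f (Sum.inl ⟨i, e i⟩)).1, fun j => ?_⟩
  simpa only [Fintype.card_fin] using
    card_le_sum_fiber_add_card hf (fun x => hom_fst_eq_of_clique (hp x.1) f x.2 (e x.1)) j

end Hom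

theorem le_of_mul_le_mul_add_of_lt {N x y r : ℕ} (h : N * x ≤ N * y + r) (hr : r < N) : x ≤ y := by
  have hlt : N * x < N * (y + 1) := by rw [Nat.mul_succ]; omega
  exact Nat.le_of_lt_succ (Nat.lt_of_mul_lt_mul_left hlt)

theorem card_internal_vertices_lt {n m : ℕ} (hm : 0 < m) (hn : n ≤ 3 * m) :
    Fintype.card ({k : Fin n // k.val + 1 < n} × Fin (2 * m - 2)) < 6 * m ^ 2 :=
  calc Fintype.card ({k : Fin n // k.val + 1 < n} × Fin (2 * m - 2))
      ≤ 3 * m * (2 * m - 2) := by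
        rw [Fintype.card_prod, Fintype.card_fin]
        exact Nat.mul_le_mul_right _ ((Fintype.card_subtype_le _).trans (by rwa [Fintype.card_fin]))
    _ < 3 * m * (2 * m) := Nat.mul_lt_mul_of_pos_left (by omega) (by omega)
    _ = 6 * m ^ 2 := by ring

/-- Let `A = {a₁, …, a_n}` be an `(m,B)`-positive multiset. Set
`pᵢ = 6m²(aᵢ + B)` and `q = 24m²B`. Let `G` be the connected graph obtained from disjoint
cliques `U₁, …, U_n` with `|Uᵢ| = pᵢ`, where for `i = 2, …, n` a designated vertex of
`Uᵢ₋₁` is joined to a designated vertex of `Uᵢ` by a path of length `2m - 1` whose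
internal vertices are new. Let `H` be the connected graph obtained from disjoint cliques
`X⁽¹⁾, …, X⁽ᵐ⁾`, each of size `q`, where for `j = 2, …, m` a designated vertex of
`X⁽ʲ⁻¹⁾` is joined by an edge to a designated vertex of `X⁽ʲ⁾`. Then `A` has a
3-partition if and only if there exists a surjective homomorphism from `G` to `H`. -/
theorem threePartition_iff_surjective_hom_proper_interval_graphs
    (n m B : ℕ) (a : Fin n → ℕ) (hn : n = 3 * m) (hsum : ∑ i, a i = m * B)
    (hpos : ∀ i, 0 < a i)
    (e s : ∀ i : Fin n, Fin (6 * m ^ 2 * (a i + B)))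
    (eH sH : Fin m → Fin (24 * m ^ 2 * B)) :
    HasThreePartition n m B a ↔
      ∃ f : intervalGuest n m (fun i => 6 * m ^ 2 * (a i + B)) e s →g
            intervalHost m (24 * m ^ 2 * B) eH sH,
        Function.Surjective f := by
  have hp (i : Fin n) : 2 < 6 * m ^ 2 * (a i + B) := by
    have hclique : 0 < 6 * m ^ 2 * (a i + B) := (e i).pos
    rw [mul_assoc] at hclique ⊢
    omega
  constructor
  · rintro ⟨part, hpart⟩
    refine exists_surjective_hom_of_sum_fiber_eq hp (part := part) fun j => ?_
    rw [← mul_sum, sum_add_distrib, (hpart j).2, sum_const, (hpart j).1, smul_eq_mul]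
    ring
  · rintro ⟨f, hf⟩
    obtain ⟨part, hpart⟩ := exists_le_sum_fiber_add_card_of_surjective_hom hp f hf
    refine ⟨part, card_fiber_eq_and_sum_fiber_eq (by simpa using hn) (by simpa using hsum) hpos
      fun j => le_of_mul_le_mul_add_of_lt ?_ (card_internal_vertices_lt j.pos hn.le)⟩
    calc 6 * m ^ 2 * ((3 + 1) * B) = 24 * m ^ 2 * B := by ring
      _ ≤ _ := hpart j
      _ = _ := by rw [← mul_sum]
end

section
/- Let G be a finite graph whose vertex set is partitioned into nonempty sets U_1, …, U_p such that each U_i is an independent set and, for all i ≠ i', either every vertex of U_i is adjacent to every vertex of U_{i'} (write U_i ~ U_{i'}) or no vertex of U_i is adjacent to any vertex of U_{i'}. Let H be a finite graph whose vertex set is analogously partitioned into nonempty independent sets W_1, …, W_q with all-or-nothing adjacency between distinct parts (write W_j ~ W_{j'}). Then there exists a surjective homomorphism from G to H if and only if there exist nonnegative integers x_{ij} (1 ≤ i ≤ p, 1 ≤ j ≤ q) such that: (a) Σ_{j=1}^q x_{ij} = |U_i| for every i; (b) Σ_{i=1}^p x_{ij} ≥ |W_j| for every j; and (c) whenever x_{ij}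 > 0, x_{i'j'} > 0 and U_i ~ U_{i'}, then W_j ~ W_{j'}. -/
/-!
Let `a : V → ι` and `b : W → κ` send each vertex to the index of its part. Since the parts of `H`
are joined all-or-nothing, only `g = b ∘ f` decides whether a map `f : V → W` is a homomorphism, and
a map `g : V → κ` lifts to a surjective `f` exactly when each fibre of `g` is at least as large as
the fibre of `b` over the same index. Since the parts of `G` are joined all-or-nothing, only the
table `x i j = #{v | a v = i ∧ g v = j}` matters about `g`, and every table with row sums
`#{v | a v = i}` comes from some `g`.
-/

open Function Set

section Fibers

variable {V W ι κ : Type*}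

theorem exists_eq_preimage_singleton {U : ι → Set V} (hU : ∀ v, ∃! i, v ∈ U i) :
    ∃ a : V → ι, U = fun i => a ⁻¹' {i} := by
  choose a ha ha_unique using hU
  refine ⟨a, funext fun i => Set.ext fun v => ⟨fun hv => (ha_unique v i hv).symm, ?_⟩⟩
  rintro rfl
  exact ha v

theorem ncard_le_ncard_preimage_of_surjective {f : V → W} (hf : Surjective f)
    {s : Set W} (hs : (f ⁻¹' s).Finite) : s.ncard ≤ (f ⁻¹' s).ncard :=
  calc s.ncard = (f '' (f ⁻¹' s)).ncard := by rw [image_preimage_eq s hf]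
    _ ≤ (f ⁻¹' s).ncard := ncard_image_le hs

theorem exists_injective_comp_eq [Finite V] [Finite W] {b : W → κ} {g : V → κ}
    (hcard : ∀ j, (b ⁻¹' {j}).ncard ≤ (g ⁻¹' {j}).ncard) :
    ∃ m : W → V, Injective m ∧ g ∘ m = b := by
  have nonempty_fiber_embedding (j : κ) : Nonempty ({w // b w = j} ↪ {v // g v = j}) := by
    have := Fintype.ofFinite {w // b w = j}
    have := Fintype.ofFinite {v // g v = j}
    refine Embedding.nonempty_of_card_le ?_
    rw [← Nat.card_eq_fintype_card, ← Nat.card_eq_fintype_card]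
    exact hcard j
  let e (j : κ) := (nonempty_fiber_embedding j).some
  refine ⟨fun w => e (b w) ⟨w, rfl⟩, ?_, funext fun w => (e (b w) ⟨w, rfl⟩).2⟩
  exact (Equiv.sigmaFiberEquiv g).injective.comp <|
    (injective_id.sigma_map fun j => (e j).injective).comp (Equiv.sigmaFiberEquiv b).symm.injective

theorem exists_surjective_comp_eq {b : W → κ} {g : V → κ} {m : W → V} (hb : Surjective b)
    (hm : Injective m) (hgm : g ∘ m = b) : ∃ f : V → W, Surjective f ∧ b ∘ f = g := by
  refine ⟨extend m id (surjInv hb ∘ g), fun w => ⟨m w, hm.extend_apply _ _ w⟩, funext fun v => ?_⟩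
  by_cases hv : ∃ w, m w = v
  · obtain ⟨w, rfl⟩ := hv
    simp only [comp_apply, hm.extend_apply, id_eq, ← hgm]
  · simp only [comp_apply, extend_apply' _ _ _ hv, surjInv_eq hb]

theorem exists_surjective_comp_eq_iff [Finite V] [Finite W] {b : W → κ} (hb : Surjective b)
    {g : V → κ} :
    (∃ f : V → W, Surjective f ∧ b ∘ f = g) ↔
      ∀ j, (b ⁻¹' {j}).ncard ≤ (g ⁻¹' {j}).ncard := by
  constructor
  · rintro ⟨f, hf, rfl⟩ j
    exact ncard_le_ncard_preimage_of_surjective hf (toFinite (f ⁻¹' (b ⁻¹' {j})))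
  · intro hcard
    obtain ⟨m, hm, hgm⟩ := exists_injective_comp_eq hcard
    exact exists_surjective_comp_eq hb hm hgm

theorem sum_ncard_inter_preimage_singleton [Fintype κ] {s : Set V} (hs : s.Finite) (g : V → κ) :
    ∑ j, (s ∩ g ⁻¹' {j}).ncard = s.ncard := by
  have pairwise_disjoint : Pairwise (Disjoint on fun j => s ∩ g ⁻¹' {j}) := fun i j hij =>
    ((disjoint_singleton.2 hij).preimage g).mono inter_subset_right inter_subset_right
  rw [← finsum_eq_sum_of_fintype,
    ← ncard_iUnion_of_finite (fun j => hs.inter_of_left (g ⁻¹' {j})) pairwise_disjoint,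
    ← inter_iUnion, ← preimage_iUnion, iUnion_of_singleton, preimage_univ, inter_univ]

theorem exists_forall_ncard_inter_preimage_singleton_eq [Finite V] [Fintype κ] {a : V → ι}
    {x : ι → κ → ℕ} (hx : ∀ i, ∑ j, x i j = (a ⁻¹' {i}).ncard) :
    ∃ g : V → κ, ∀ i j, (a ⁻¹' {i} ∩ g ⁻¹' {j}).ncard = x i j := by
  have nonempty_fiber_equiv (i : ι) : Nonempty ({v // a v = i} ≃ Σ j, Fin (x i j)) := by
    refine Finite.card_eq.1 ((hx i).symm.trans ?_)
    simp only [Nat.card_sigma, Nat.card_fin]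
  let e : V ≃ Σ i, Σ j, Fin (x i j) :=
    (Equiv.sigmaFiberEquiv a).symm.trans <|
      Equiv.sigmaCongrRight fun i => (nonempty_fiber_equiv i).some
  refine ⟨fun v => (e v).2.1, fun i j => ?_⟩
  let cell (k : Fin (x i j)) : Σ i, Σ j, Fin (x i j) := ⟨i, j, k⟩
  have cell_injective : Injective cell := sigma_mk_injective.comp sigma_mk_injective
  have mem_range_cell_iff (t : Σ i, Σ j, Fin (x i j)) : t.1 = i ∧ t.2.1 = j ↔ t ∈ range cell := by
    constructor
    · rintro ⟨rfl, rfl⟩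
      exact ⟨t.2.2, rfl⟩
    · rintro ⟨k, rfl⟩
      exact ⟨rfl, rfl⟩
  calc (a ⁻¹' {i} ∩ (fun v => (e v).2.1) ⁻¹' {j}).ncard
      = (e ⁻¹' range cell).ncard := congrArg ncard (Set.ext fun v => mem_range_cell_iff (e v))
    _ = (range cell).ncard := ncard_preimage_of_injective_subset_range e.injective
        (e.surjective.range_eq ▸ subset_univ _)
    _ = x i j := by
        rw [← Nat.card_coe_set_eq, Nat.card_range_of_injective cell_injective, Nat.card_fin]

end Fibers

section Relations

variable {V W ι κ : Type*} {r : V → V → Prop} {s : W → W → Prop}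

theorem exists_surjective_relHom_iff [Finite V] [Finite W] {b : W → κ} (hb : Surjective b)
    {S : κ → κ → Prop} (hs : ∀ w z, s w z ↔ S (b w) (b z)) :
    (∃ f : r →r s, Surjective f) ↔
      ∃ g : r →r S, ∀ j, (b ⁻¹' {j}).ncard ≤ (g ⁻¹' {j}).ncard := by
  constructor
  · rintro ⟨f, hf⟩
    exact ⟨⟨b ∘ f, fun h => (hs _ _).1 (f.map_rel h)⟩,
      (exists_surjective_comp_eq_iff hb).1 ⟨f, hf, rfl⟩⟩
  · rintro ⟨⟨g, hg⟩, hcard⟩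
    obtain ⟨f, hf, rfl⟩ := (exists_surjective_comp_eq_iff hb).2 hcard
    exact ⟨⟨f, fun h => (hs _ _).2 (hg h)⟩, hf⟩

theorem exists_relHom_le_ncard_fiber_iff [Finite V] [Fintype ι] [Fintype κ] {a : V → ι}
    {R : ι → ι → Prop} (hr : ∀ u v, r u v ↔ R (a u) (a v)) {S : κ → κ → Prop} {c : κ → ℕ} :
    (∃ g : r →r S, ∀ j, c j ≤ (g ⁻¹' {j}).ncard) ↔
      ∃ x : ι → κ → ℕ,
        (∀ i, ∑ j, x i j = (a ⁻¹' {i}).ncard) ∧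
        (∀ j, c j ≤ ∑ i, x i j) ∧
        (∀ i i' j j', 0 < x i j → 0 < x i' j' → R i i' → S j j') := by
  have column_sum (g : V → κ) (j : κ) :
      ∑ i, (a ⁻¹' {i} ∩ g ⁻¹' {j}).ncard = (g ⁻¹' {j}).ncard := by
    simpa only [inter_comm] using sum_ncard_inter_preimage_singleton (toFinite (g ⁻¹' {j})) a
  constructor
  · rintro ⟨g, hg⟩
    refine ⟨fun i j => (a ⁻¹' {i} ∩ g ⁻¹' {j}).ncard,
      fun i => sum_ncard_inter_preimage_singleton (toFinite _) g,
      fun j => (hg j).trans_eq (column_sum g j).symm, fun i i' j j' hij hij' hR => ?_⟩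
    obtain ⟨u, rfl, rfl⟩ := nonempty_of_ncard_ne_zero hij.ne'
    obtain ⟨v, rfl, rfl⟩ := nonempty_of_ncard_ne_zero hij'.ne'
    exact g.map_rel ((hr u v).2 hR)
  · rintro ⟨x, hrow, hcol, hcompat⟩
    obtain ⟨g, hg⟩ := exists_forall_ncard_inter_preimage_singleton_eq hrow
    have cell_pos (v : V) : 0 < x (a v) (g v) := by
      rw [← hg, ncard_pos]
      exact ⟨v, rfl, rfl⟩
    refine ⟨⟨g, fun {u v} h => hcompat _ _ _ _ (cell_pos u) (cell_pos v) ((hr u v).1 h)⟩,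
      fun j => (hcol j).trans_eq ?_⟩
    simp only [← hg]
    exact column_sum g j

/-- Every element of `A` is `r`-related to every element of `B`, or no element of `A` is
`r`-related to any element of `B`: the condition imposed on the adjacency between two parts. Here
`A = B` is allowed, so that independence of a part is the second alternative for the pair formed by
the part and itself. -/
def AllOrNothing (r : V → V → Prop) (A B : Set V) : Prop :=
  (∀ u ∈ A, ∀ v ∈ B, r u v) ∨ (∀ u ∈ A, ∀ v ∈ B, ¬ r u v)

theorem AllOrNothing.rel_iff {A B : Set V} (h : AllOrNothing r A B) {u v : V} (hu : u ∈ A)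
    (hv : v ∈ B) : r u v ↔ ∀ u' ∈ A, ∀ v' ∈ B, r u' v' :=
  ⟨fun huv => h.resolve_right fun hnone => hnone u hu v hv huv, fun hall => hall u hu v hv⟩

theorem allOrNothing_of_independent {U : ι → Set V} (hind : ∀ i, ∀ u ∈ U i, ∀ v ∈ U i, ¬ r u v)
    (haon : ∀ i i', i ≠ i' → AllOrNothing r (U i) (U i')) (i i' : ι) :
    AllOrNothing r (U i) (U i') := by
  obtain rfl | hne := eq_or_ne i i'
  exacts [.inr (hind i), haon i i' hne]

theorem surjective_hom_iff_integer_program_general [Finite V] [Finite W] [Fintype ι] [Fintype κ]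
    {U : ι → Set V} {Wp : κ → Set W}
    (hUpart : ∀ v, ∃! i, v ∈ U i) (hUaon : ∀ i i', AllOrNothing r (U i) (U i'))
    (hWpart : ∀ w, ∃! j, w ∈ Wp j) (hWne : ∀ j, (Wp j).Nonempty)
    (hWaon : ∀ j j', AllOrNothing s (Wp j) (Wp j')) :
    (∃ f : r →r s, Surjective f) ↔
      ∃ x : ι → κ → ℕ,
        (∀ i, ∑ j, x i j = (U i).ncard) ∧
        (∀ j, (Wp j).ncard ≤ ∑ i, x i j) ∧
        (∀ i i' j j', 0 < x i j → 0 < x i' j' →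
          (∀ u ∈ U i, ∀ v ∈ U i', r u v) →
          (∀ w ∈ Wp j, ∀ z ∈ Wp j', s w z)) := by
  obtain ⟨a, rfl⟩ := exists_eq_preimage_singleton hUpart
  obtain ⟨b, rfl⟩ := exists_eq_preimage_singleton hWpart
  have hr (u v : V) := (hUaon (a u) (a v)).rel_iff (u := u) (v := v) rfl rfl
  have hs (w z : W) := (hWaon (b w) (b z)).rel_iff (u := w) (v := z) rfl rfl
  exact (exists_surjective_relHom_iff hWne
      (S := fun j j' => ∀ w ∈ b ⁻¹' {j}, ∀ z ∈ b ⁻¹' {j'}, s w z) hs).trans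
    (exists_relHom_le_ncard_fiber_iff
      (R := fun i i' => ∀ u ∈ a ⁻¹' {i}, ∀ v ∈ a ⁻¹' {i'}, r u v) hr)

end Relations

/-- Let `G` be a finite graph whose vertex set is partitioned into
nonempty independent sets `U₁, …, U_p` with all-or-nothing adjacency between distinct
parts, and let `H` be a finite graph analogously partitioned into nonempty independent
sets `W₁, …, W_q` with all-or-nothing adjacency between distinct parts. Writing
`Uᵢ ~ Uᵢ'` for "every vertex of `Uᵢ` is adjacent to every vertex of `Uᵢ'`" (and likewise
for the `W`-parts), there exists a surjective homomorphism from `G` to `H` if and only if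
there exist nonnegative integers `x i j` such that:
(a) `∑ j, x i j = |Uᵢ|` for every `i`;
(b) `∑ i, x i j ≥ |W_j|` for every `j`; and
(c) whenever `x i j > 0`, `x i' j' > 0` and `Uᵢ ~ Uᵢ'`, then `W_j ~ W_j'`. -/
theorem surjective_hom_iff_integer_program {V W : Type*} [Fintype V] [Fintype W]
    (G : SimpleGraph V) (H : SimpleGraph W) (p q : ℕ)
    (U : Fin p → Set V) (Wp : Fin q → Set W)
    (hUpart : ∀ v : V, ∃! i : Fin p, v ∈ U i)
    (hUne : ∀ i, (U i).Nonempty)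
    (hUind : ∀ i, ∀ u ∈ U i, ∀ v ∈ U i, ¬ G.Adj u v)
    (hUaon : ∀ i i' : Fin p, i ≠ i' →
      (∀ u ∈ U i, ∀ v ∈ U i', G.Adj u v) ∨ (∀ u ∈ U i, ∀ v ∈ U i', ¬ G.Adj u v))
    (hWpart : ∀ w : W, ∃! j : Fin q, w ∈ Wp j)
    (hWne : ∀ j, (Wp j).Nonempty)
    (hWind : ∀ j, ∀ w ∈ Wp j, ∀ z ∈ Wp j, ¬ H.Adj w z)
    (hWaon : ∀ j j' : Fin q, j ≠ j' →
      (∀ w ∈ Wp j, ∀ z ∈ Wp j', H.Adj w z) ∨ (∀ w ∈ Wp j, ∀ z ∈ Wp j', ¬ H.Adj w z)) :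
    (∃ f : G →g H, Function.Surjective f) ↔
      ∃ x : Fin p → Fin q → ℕ,
        (∀ i, ∑ j, x i j = (U i).ncard) ∧
        (∀ j, (Wp j).ncard ≤ ∑ i, x i j) ∧
        (∀ i i' j j', 0 < x i j → 0 < x i' j' →
          (∀ u ∈ U i, ∀ v ∈ U i', G.Adj u v) →
          (∀ w ∈ Wp j, ∀ z ∈ Wp j', H.Adj w z)) :=
  surjective_hom_iff_integer_program_general hUpart (allOrNothing_of_independent hUind hUaon)
    hWpart hWne (allOrNothing_of_independent hWind hWaon)
end
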